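/- There is a constant C > 0 (depending only on η) such that for every s ∈ ℕ, every integer Q with 1 ≤ Q ≤ 2^{2s}, every r ∈ {1, …, Q}, every β ∈ [1/2, 1], and every finitely supported f : ℤ → ℂ, one has ( Σ_{x ∈ ℤ} sup_{n ∈ ℕ₀} |ℱ⁻¹(M̂_{2^n}^β η_s f̂)(Qx + r)|² )^{1/2} ≤ C ( Σ_{x ∈ ℤ} |ℱ⁻¹(η_s f̂)(Qx + r)|² )^{1/2}. -/

import Mathlib

open scoped BigOperators

/-- `η` is smooth, `0 ≤ η ≤ 1`, `η = 1` on `[−1/4, 1/4]`, `η = 0` off `(−1/2, 1/2)`,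
and `η` is a convolution of two smooth functions supported in `(−1/2, 1/2)`. -/
def IsEta (η : ℝ → ℝ) : Prop :=
  ContDiff ℝ (⊤ : ℕ∞) η ∧ (∀ ξ, 0 ≤ η ξ ∧ η ξ ≤ 1) ∧ (∀ ξ : ℝ, |ξ| ≤ 1 / 4 → η ξ = 1) ∧
    (∀ ξ : ℝ, 1 / 2 ≤ |ξ| → η ξ = 0) ∧
    ∃ g₁ g₂ : ℝ → ℝ, ContDiff ℝ (⊤ : ℕ∞) g₁ ∧ ContDiff ℝ (⊤ : ℕ∞) g₂ ∧
      (∀ x : ℝ, x ∉ Set.Ioo (-(1 / 2) : ℝ) (1 / 2) → g₁ x = 0) ∧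
      (∀ x : ℝ, x ∉ Set.Ioo (-(1 / 2) : ℝ) (1 / 2) → g₂ x = 0) ∧
      ∀ x : ℝ, η x = ∫ y : ℝ, g₁ y * g₂ (x - y)

/-- `η_s(ξ) = η(2^{4s} ξ)`, regarded as a 1-periodic function (periodization). -/
noncomputable def etaPer (η : ℝ → ℝ) (s : ℕ) (ξ : ℝ) : ℝ :=
  ∑' k : ℤ, η (2 ^ (4 * s) * (ξ - k))

/-- The Fourier transform `f̂(ξ) = Σ_{n ∈ ℤ} f(n) e^{−2πi ξ n}` of a (finitely supported)
function on `ℤ`. -/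
noncomputable def fhat (f : ℤ → ℂ) (ξ : ℝ) : ℂ :=
  ∑' n : ℤ, f n * Complex.exp (-(2 * Real.pi * Complex.I * ξ * n))

/-- The inverse Fourier transform `ℱ⁻¹g(x) = ∫₀¹ g(ξ) e^{2πi ξ x} dξ`, `x ∈ ℤ`. -/
noncomputable def FinvInt (g : ℝ → ℂ) (x : ℤ) : ℂ :=
  ∫ ξ in (0 : ℝ)..1, g ξ * Complex.exp (2 * Real.pi * Complex.I * ξ * x)

/-- The multiplier `M̂_N^β(ξ) = (1/N) Σ_{n=1}^N ((n^β − (n−1)^β)/β) e^{2πi ξ n}`. -/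
noncomputable def Mhat (β : ℝ) (N : ℕ) (ξ : ℝ) : ℂ :=
  ((N : ℂ))⁻¹ * ∑ n ∈ Finset.Icc 1 N,
    (((((n : ℝ) ^ β - ((n : ℝ) - 1) ^ β) / β) : ℝ) : ℂ) *
      Complex.exp (2 * Real.pi * Complex.I * ξ * n)

/-!
Applying `M̂_N^β` to a symbol `g` turns `F = ℱ⁻¹g` into the averages
`N⁻¹ ∑ n ∈ [1, N], w n * F (y + n)`, whose weights are bounded by `1 / β`. The cutoff `η_s` makes
`g` live on `|ξ| ≤ 1 / (2Q)`, an interval of length `1 / Q`; Parseval on that interval shows that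
`∑ x, ‖F (Q x + c)‖²` does not depend on `c`, and that passing from `F` to its increments
`F (y + 1) - F y` costs a factor `O(1 / Q²)`. Hence, on a block of length `Q`, the size of `F` at
the left endpoint plus its variation is an upper bound for `‖F‖` whose `ℓ²` norm over the blocks is
comparable to that of `x ↦ F (Q x + r)`. The averages of `F` from `Q x + r` on are dominated by the
one-sided maximal function of this bound, which is bounded on `ℓ²(ℤ)`: Garsia's argument gives the
weak-type estimate, which is integrated over all heights.
-/

section MaximalInequality

open Finset MeasureTheory

section SelfMap

variable {α : Type*} (f : α → α) (g : α → ℝ)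

theorem partialSups_birkhoffSum_succ_le (N : ℕ) (x : α) :
    partialSups (birkhoffSum f g · x) (N + 1) ≤
      partialSups (birkhoffSum f g · (f x)) N +
        if 0 < partialSups (birkhoffSum f g · x) (N + 1) then g x else 0 := by
  have hnonneg : 0 ≤ partialSups (birkhoffSum f g · (f x)) N :=
    le_partialSups_of_le (birkhoffSum f g · (f x)) (Nat.zero_le N)
  split_ifs with hpos
  · obtain ⟨n, hn, hmax⟩ := exists_partialSups_eq (birkhoffSum f g · x) (N + 1)
    rw [hmax] at hpos ⊢
    cases n with
    | zero => simp at hpos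
    | succ n =>
      rw [birkhoffSum_succ', add_comm]
      gcongr
      exact le_partialSups_of_le (birkhoffSum f g · (f x)) (by omega)
  · linarith

/-- Garsia's form of the maximal ergodic theorem along the first `K` points of an orbit, the
`k`-th point seeing only the time `K - k` that remains. -/
theorem partialSups_birkhoffSum_le_sum_ite (K : ℕ) (x : α) :
    partialSups (birkhoffSum f g · x) K ≤
      ∑ k ∈ range K,
        if 0 < partialSups (birkhoffSum f g · (f^[k] x)) (K - k) then g (f^[k] x) else 0 := by
  induction K generalizing x with
  | zero => simp
  | succ K ih =>
    rw [sum_range_succ']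
    refine (partialSups_birkhoffSum_succ_le f g K x).trans (add_le_add_left ?_ _)
    simpa only [Function.iterate_succ_apply, Nat.add_sub_add_right] using ih (f x)

/-- The truncated maximal function of `g` along the orbits of `f`: the largest of its averages
over `x, f x, …, f^[n] x` with `n ≤ N`. -/
noncomputable def birkhoffMax (N : ℕ) (x : α) : ℝ :=
  partialSups (fun n ↦ birkhoffAverage ℝ f g (n + 1) x) N

variable {g} in
theorem lt_birkhoffMax_iff {l : ℝ} {N : ℕ} {x : α} :
    l < birkhoffMax f g N x ↔
      0 < partialSups (birkhoffSum f (g · - l) · x) (N + 1) := by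
  have hle (n : ℕ) : birkhoffAverage ℝ f g (n + 1) x ≤ l ↔
      birkhoffSum f (g · - l) (n + 1) x ≤ 0 := by
    rw [birkhoffAverage, smul_eq_mul, inv_mul_le_iff₀ (by positivity)]
    simp [birkhoffSum, sum_sub_distrib]
  rw [birkhoffMax, ← not_le, ← not_le, partialSups_le_iff, partialSups_le_iff, not_iff_not]
  refine ⟨fun h n hn ↦ ?_, fun h n hn ↦ (hle n).2 (h (n + 1) (by omega))⟩
  cases n with
  | zero => simp
  | succ n => exact (hle n).1 (h n (by omega))

theorem sum_ite_lt_birkhoffMax_nonneg (l : ℝ) (K : ℕ) (x : α) :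
    0 ≤ ∑ k ∈ range K,
      if l < birkhoffMax f g (K - 1 - k) (f^[k] x) then g (f^[k] x) - l else 0 := by
  have hnonneg : 0 ≤ partialSups (birkhoffSum f (g · - l) · x) K :=
    le_partialSups_of_le (birkhoffSum f (g · - l) · x) (Nat.zero_le K)
  refine (hnonneg.trans (partialSups_birkhoffSum_le_sum_ite f (g · - l) K x)).trans_eq
    (sum_congr rfl fun k hk ↦ ?_)
  rw [show K - k = K - 1 - k + 1 by have := mem_range.1 hk; omega]
  simp only [lt_birkhoffMax_iff]

end SelfMap

theorem integral_Ioi_ite_sub (b : ℝ) {m : ℝ} (hm : 0 ≤ m) :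
    IntegrableOn (fun l : ℝ ↦ if l < m then b - l else 0) (Set.Ioi 0) ∧
      ∫ l in Set.Ioi (0 : ℝ), (if l < m then b - l else 0) = b * m - m ^ 2 / 2 := by
  have hind : (fun l : ℝ ↦ if l < m then b - l else 0) = (Set.Iio m).indicator (b - ·) := rfl
  have hcont : Continuous fun l : ℝ ↦ b - l := by fun_prop
  rw [hind, integrableOn_indicator_iff measurableSet_Iio, Set.Iio_inter_Ioi,
    setIntegral_indicator measurableSet_Iio, Set.Ioi_inter_Iio, ← integral_Ioc_eq_integral_Ioo,
    ← intervalIntegral.integral_of_le hm]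
  refine ⟨hcont.integrableOn_Icc.mono_set Set.Ioo_subset_Icc_self, ?_⟩
  rw [intervalIntegral.integral_sub (by simp) (by simp)]
  simp [mul_comm]

/-- Integrating the weak-type hypothesis over all heights gives `∑ m ^ 2 / 2 ≤ ∑ b * m`. -/
theorem sum_sq_le_four_mul_sum_sq {ι : Type*} {t : Finset ι} {m b : ι → ℝ}
    (hm : ∀ i ∈ t, 0 ≤ m i)
    (hlevel : ∀ l, 0 < l → 0 ≤ ∑ i ∈ t, if l < m i then b i - l else 0) :
    ∑ i ∈ t, m i ^ 2 ≤ 4 * ∑ i ∈ t, b i ^ 2 := by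
  have hint : 0 ≤ ∑ i ∈ t, (b i * m i - m i ^ 2 / 2) := by
    calc 0 ≤ ∫ l in Set.Ioi (0 : ℝ), ∑ i ∈ t, if l < m i then b i - l else 0 :=
          setIntegral_nonneg measurableSet_Ioi hlevel
      _ = ∑ i ∈ t, (b i * m i - m i ^ 2 / 2) := by
          rw [integral_finsetSum t fun i hi ↦ (integral_Ioi_ite_sub (b i) (hm i hi)).1]
          exact sum_congr rfl fun i hi ↦ (integral_Ioi_ite_sub (b i) (hm i hi)).2
  have hyoung : ∑ i ∈ t, (b i * m i - m i ^ 2 / 2) ≤ ∑ i ∈ t, (b i ^ 2 - m i ^ 2 / 4) :=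
    sum_le_sum fun i _ ↦ by nlinarith [sq_nonneg (b i - m i / 2)]
  simp only [sum_sub_distrib, ← sum_div] at hint hyoung
  linarith

section SelfMap

variable {α : Type*} (f : α → α) {g : α → ℝ}

theorem birkhoffAverage_nonneg (hg : ∀ x, 0 ≤ g x) (n : ℕ) (x : α) :
    0 ≤ birkhoffAverage ℝ f g n x :=
  smul_nonneg (by positivity) (sum_nonneg fun _ _ ↦ hg _)

theorem birkhoffAverage_succ_le {B : ℝ} (hB : ∀ x, g x ≤ B) (n : ℕ) (x : α) :
    birkhoffAverage ℝ f g (n + 1) x ≤ B := by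
  rw [birkhoffAverage, smul_eq_mul, inv_mul_le_iff₀ (by positivity), ← nsmul_eq_mul]
  simpa [birkhoffSum] using sum_le_card_nsmul (range (n + 1)) (fun k ↦ g (f^[k] x)) B fun _ _ ↦ hB _

theorem birkhoffMax_mono (x : α) : Monotone (birkhoffMax f g · x) :=
  partialSups_monotone fun n ↦ birkhoffAverage ℝ f g (n + 1) x

theorem birkhoffMax_nonneg (hg : ∀ x, 0 ≤ g x) (N : ℕ) (x : α) : 0 ≤ birkhoffMax f g N x :=
  (birkhoffAverage_nonneg f hg 1 x).trans
    (le_partialSups_of_le (fun n ↦ birkhoffAverage ℝ f g (n + 1) x) (Nat.zero_le N))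

theorem sum_sq_birkhoffMax_le (hg : ∀ x, 0 ≤ g x) (K : ℕ) (x : α) :
    ∑ k ∈ range K, birkhoffMax f g (K - 1 - k) (f^[k] x) ^ 2 ≤
      4 * ∑ k ∈ range K, g (f^[k] x) ^ 2 :=
  sum_sq_le_four_mul_sum_sq (fun _ _ ↦ birkhoffMax_nonneg f hg _ _)
    fun l _ ↦ sum_ite_lt_birkhoffMax_nonneg f g l K x

end SelfMap

/-- The one-sided Hardy-Littlewood maximal function of `H : ℤ → ℝ`: the supremum over `L ≥ 1` of
the averages of `H` over `x, x + 1, …, x + L - 1`. It is the junk value `0` where these averages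
are unbounded. -/
noncomputable def forwardMaximal (H : ℤ → ℝ) (x : ℤ) : ℝ :=
  ⨆ n : ℕ, birkhoffAverage ℝ (· + 1) H (n + 1) x

section forwardMaximal

variable {H : ℤ → ℝ}

theorem add_one_iterate (k : ℕ) (x : ℤ) : (· + 1)^[k] x = x + k := by
  simp

theorem birkhoffSum_add_one (n : ℕ) (x : ℤ) :
    birkhoffSum (· + 1) H n x = ∑ j ∈ range n, H (x + j) := by
  simp only [birkhoffSum, add_one_iterate]

theorem bddAbove_birkhoffAverage (hsum : Summable fun x ↦ H x ^ 2) (x : ℤ) :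
    BddAbove (Set.range fun n : ℕ ↦ birkhoffAverage ℝ (· + 1) H (n + 1) x) := by
  refine ⟨√(∑' y, H y ^ 2), Set.forall_mem_range.2 fun n ↦ ?_⟩
  exact birkhoffAverage_succ_le _
    (fun y ↦ Real.le_sqrt_of_sq_le (hsum.le_tsum y fun _ _ ↦ sq_nonneg _)) n x

theorem birkhoffSum_le_mul_forwardMaximal (hsum : Summable fun x ↦ H x ^ 2) (n : ℕ) (x : ℤ) :
    ∑ j ∈ range (n + 1), H (x + j) ≤ (n + 1) * forwardMaximal H x := by
  have h : birkhoffAverage ℝ (· + 1) H (n + 1) x ≤ forwardMaximal H x :=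
    le_ciSup (bddAbove_birkhoffAverage hsum x) n
  rw [birkhoffAverage, smul_eq_mul, inv_mul_le_iff₀ (by positivity), birkhoffSum_add_one] at h
  simpa only [Nat.cast_add, Nat.cast_one] using h

theorem forwardMaximal_nonneg (hH : ∀ x, 0 ≤ H x) (x : ℤ) : 0 ≤ forwardMaximal H x :=
  Real.iSup_nonneg fun _ ↦ birkhoffAverage_nonneg _ hH _ _

theorem sum_sq_birkhoffMax_le_tsum (hH : ∀ x, 0 ≤ H x) (hsum : Summable fun x ↦ H x ^ 2)
    (t : Finset ℤ) (N : ℕ) :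
    ∑ x ∈ t, birkhoffMax (· + 1) H N x ^ 2 ≤ 4 * ∑' x, H x ^ 2 := by
  obtain ⟨a, ha⟩ := t.bddBelow
  obtain ⟨b, hb⟩ := t.bddAbove
  have hinj : Function.Injective fun k : ℕ ↦ a + (k : ℤ) := fun _ _ h ↦ by simpa using h
  obtain ⟨K, hK⟩ : ∃ K : ℕ, b < a + K := ⟨(b - a).toNat + 1, by omega⟩
  calc ∑ x ∈ t, birkhoffMax (· + 1) H N x ^ 2
      ≤ ∑ x ∈ (range K).image fun k : ℕ ↦ a + (k : ℤ), birkhoffMax (· + 1) H N x ^ 2 := by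
        refine sum_le_sum_of_subset_of_nonneg (fun x hx ↦ ?_) fun _ _ _ ↦ sq_nonneg _
        have := ha hx
        have := hb hx
        exact mem_image.2 ⟨(x - a).toNat, mem_range.2 (by omega), by omega⟩
    _ = ∑ k ∈ range K, birkhoffMax (· + 1) H N (a + k) ^ 2 := sum_image hinj.injOn
    _ ≤ ∑ k ∈ range K, birkhoffMax (· + 1) H (K + N - 1 - k) (a + k) ^ 2 := by
        refine sum_le_sum fun k hk ↦
          pow_le_pow_left₀ (birkhoffMax_nonneg _ hH _ _) (birkhoffMax_mono _ _ ?_) 2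
        have := mem_range.1 hk
        omega
    _ ≤ ∑ k ∈ range (K + N), birkhoffMax (· + 1) H (K + N - 1 - k) (a + k) ^ 2 :=
        sum_le_sum_of_subset_of_nonneg (range_mono (Nat.le_add_right K N)) fun _ _ _ ↦ sq_nonneg _
    _ ≤ 4 * ∑ k ∈ range (K + N), H (a + k) ^ 2 := by
        simpa only [add_one_iterate] using sum_sq_birkhoffMax_le (· + (1 : ℤ)) hH (K + N) a
    _ ≤ 4 * ∑' x, H x ^ 2 := by
        gcongr
        exact ((hsum.comp_injective hinj).sum_le_tsum _ fun _ _ ↦ sq_nonneg _).trans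
          (tsum_comp_le_tsum_of_inj hsum (fun _ ↦ sq_nonneg _) hinj)

theorem tendsto_birkhoffMax (hsum : Summable fun x ↦ H x ^ 2) (x : ℤ) :
    Filter.Tendsto (birkhoffMax (· + 1) H · x) Filter.atTop (nhds (forwardMaximal H x)) := by
  have hbdd := bddAbove_birkhoffAverage hsum x
  rw [forwardMaximal, ← ciSup_partialSups_eq hbdd]
  exact tendsto_atTop_ciSup (birkhoffMax_mono _ x) (bddAbove_range_partialSups.2 hbdd)

theorem sum_sq_forwardMaximal_le (hH : ∀ x, 0 ≤ H x) (hsum : Summable fun x ↦ H x ^ 2)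
    (t : Finset ℤ) : ∑ x ∈ t, forwardMaximal H x ^ 2 ≤ 4 * ∑' x, H x ^ 2 :=
  le_of_tendsto' (tendsto_finsetSum t fun x _ ↦ (tendsto_birkhoffMax hsum x).pow 2)
    (sum_sq_birkhoffMax_le_tsum hH hsum t)

end forwardMaximal

end MaximalInequality

section BlockMajorant

open Finset

variable {E : Type*} [SeminormedAddCommGroup E]

/-- A majorant of `‖F‖` on the block `Q * x + r, …, Q * x + r + Q`: the size of `F` at the left
endpoint plus the total variation of `F` over the block. -/
noncomputable def blockMajorant (F : ℤ → E) (Q : ℕ) (r x : ℤ) : ℝ :=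
  ‖F (Q * x + r)‖ + ∑ j ∈ range Q, ‖F (Q * x + r + j + 1) - F (Q * x + r + j)‖

variable {F : ℤ → E} {Q : ℕ} {r : ℤ}

theorem blockMajorant_nonneg (x : ℤ) : 0 ≤ blockMajorant F Q r x := by
  unfold blockMajorant
  positivity

theorem norm_le_blockMajorant {n : ℕ} (hn : n ≤ Q) (x : ℤ) :
    ‖F (Q * x + r + n)‖ ≤ blockMajorant F Q r x := by
  have htelescope : F (Q * x + r + n) = F (Q * x + r) +
      ∑ j ∈ range n, (F (Q * x + r + j + 1) - F (Q * x + r + j)) := by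
    simpa [add_assoc] using (eq_add_of_sub_eq'
      (sum_range_sub (fun j : ℕ ↦ F (Q * x + r + j)) n).symm)
  calc ‖F (Q * x + r + n)‖
      ≤ ‖F (Q * x + r)‖ + ∑ j ∈ range n, ‖F (Q * x + r + j + 1) - F (Q * x + r + j)‖ := by
        rw [htelescope]
        exact norm_add_le_of_le le_rfl (norm_sum_le _ _)
    _ ≤ blockMajorant F Q r x := by
        unfold blockMajorant
        gcongr

theorem norm_le_blockMajorant_add_div (hQ : 0 < Q) (n : ℕ) (x : ℤ) :
    ‖F (Q * x + r + n)‖ ≤ blockMajorant F Q r (x + (n / Q : ℕ)) := by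
  have hsplit : (Q * x + r + n : ℤ) = Q * (x + (n / Q : ℕ)) + r + (n % Q : ℕ) := by
    have : (n : ℤ) = Q * (n / Q : ℕ) + (n % Q : ℕ) := mod_cast (Nat.div_add_mod n Q).symm
    linear_combination this
  rw [hsplit]
  exact norm_le_blockMajorant (Nat.mod_lt n hQ).le _

theorem sq_blockMajorant_le (x : ℤ) :
    blockMajorant F Q r x ^ 2 ≤ 2 * ‖F (Q * x + r)‖ ^ 2 +
      2 * (Q * ∑ j ∈ range Q, ‖F (Q * x + r + j + 1) - F (Q * x + r + j)‖ ^ 2) := by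
  have hcauchy := sq_sum_le_card_mul_sum_sq (s := range Q)
    (f := fun j : ℕ ↦ ‖F (Q * x + r + j + 1) - F (Q * x + r + j)‖)
  rw [card_range] at hcauchy
  unfold blockMajorant
  linarith [add_sq_le (a := ‖F (Q * x + r)‖)
    (b := ∑ j ∈ range Q, ‖F (Q * x + r + j + 1) - F (Q * x + r + j)‖)]

theorem summable_sq_blockMajorant_and_tsum_le_of_hasSum {A D : ℝ}
    (hF : HasSum (fun x : ℤ ↦ ‖F (Q * x + r)‖ ^ 2) A)
    (hD : ∀ j : ℕ, HasSum (fun x : ℤ ↦ ‖F (Q * x + r + j + 1) - F (Q * x + r + j)‖ ^ 2) D) :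
    Summable (fun x ↦ blockMajorant F Q r x ^ 2) ∧
      ∑' x, blockMajorant F Q r x ^ 2 ≤ 2 * A + 2 * (Q * (Q * D)) := by
  have hbound := (hF.mul_left 2).add
    (((hasSum_sum (s := range Q) fun j _ ↦ hD j).mul_left (Q : ℝ)).mul_left 2)
  have hsum : Summable fun x ↦ blockMajorant F Q r x ^ 2 :=
    .of_nonneg_of_le (fun _ ↦ sq_nonneg _) sq_blockMajorant_le hbound.summable
  refine ⟨hsum, (hsum.tsum_le_tsum sq_blockMajorant_le hbound.summable).trans_eq ?_⟩
  rw [hbound.tsum_eq, sum_const, card_range, nsmul_eq_mul]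

theorem sum_range_mul_div {R : Type*} [Semiring R] (u : ℕ → R) (hQ : 0 < Q) (L : ℕ) :
    ∑ n ∈ range (Q * L), u (n / Q) = Q * ∑ m ∈ range L, u m := by
  induction L with
  | zero => simp
  | succ L ih =>
    have hblock : ∑ j ∈ range Q, u ((Q * L + j) / Q) = Q * u L := by
      rw [← nsmul_eq_mul, ← card_range Q, ← sum_const, card_range]
      refine sum_congr rfl fun j hj ↦ ?_
      rw [Nat.mul_add_div hQ, Nat.div_eq_of_lt (mem_range.1 hj), add_zero]
    rw [Nat.mul_succ, sum_range_add, ih, hblock, sum_range_succ, mul_add]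

variable {H : ℤ → ℝ}

theorem sum_Icc_div_le_forwardMaximal (hH : ∀ x, 0 ≤ H x) (hsum : Summable fun x ↦ H x ^ 2)
    (hQ : 0 < Q) (N : ℕ) (x : ℤ) :
    ∑ n ∈ Icc 1 N, H (x + (n / Q : ℕ)) ≤ 2 * N * forwardMaximal H x := by
  have hMH := forwardMaximal_nonneg hH x
  obtain hNQ | hQN := lt_or_ge N Q
  · have hconst : ∀ n ∈ Icc 1 N, H (x + (n / Q : ℕ)) ≤ forwardMaximal H x := fun n hn ↦ by
      rw [Nat.div_eq_of_lt ((mem_Icc.1 hn).2.trans_lt hNQ)]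
      simpa using birkhoffSum_le_mul_forwardMaximal hsum 0 x
    have := sum_le_card_nsmul _ _ _ hconst
    rw [Nat.card_Icc, Nat.add_sub_cancel, nsmul_eq_mul] at this
    nlinarith [mul_nonneg N.cast_nonneg hMH]
  · have hlt : N < Q * (N / Q + 1) := Nat.lt_mul_div_succ N hQ
    have hlen : (Q * (N / Q + 1 : ℕ) : ℝ) ≤ 2 * N := by
      have : Q * (N / Q + 1) ≤ 2 * N := by linarith [Nat.mul_div_le N Q]
      exact_mod_cast this
    calc ∑ n ∈ Icc 1 N, H (x + (n / Q : ℕ))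
        ≤ ∑ n ∈ range (Q * (N / Q + 1)), H (x + (n / Q : ℕ)) := by
          refine sum_le_sum_of_subset_of_nonneg (fun n hn ↦ ?_) fun _ _ _ ↦ hH _
          exact mem_range.2 ((mem_Icc.1 hn).2.trans_lt hlt)
      _ = Q * ∑ m ∈ range (N / Q + 1), H (x + m) :=
          sum_range_mul_div (fun m : ℕ ↦ H (x + m)) hQ _
      _ ≤ Q * ((N / Q + 1 : ℕ) * forwardMaximal H x) := by
          gcongr
          simpa using birkhoffSum_le_mul_forwardMaximal hsum (N / Q) x
      _ ≤ 2 * N * forwardMaximal H x := by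
          rw [← mul_assoc]
          gcongr

end BlockMajorant

theorem norm_weightedAverage_le_forwardMaximal {F : ℤ → ℂ} {Q : ℕ} {r : ℤ} {w : ℕ → ℂ} {W : ℝ}
    (hQ : 0 < Q) (hsum : Summable fun x ↦ blockMajorant F Q r x ^ 2)
    (hw : ∀ n, 1 ≤ n → ‖w n‖ ≤ W) (N : ℕ) (x : ℤ) :
    ‖(N : ℂ)⁻¹ * ∑ n ∈ Finset.Icc 1 N, w n * F (Q * x + r + n)‖ ≤
      2 * W * forwardMaximal (blockMajorant F Q r) x := by
  have hW : 0 ≤ W := (norm_nonneg _).trans (hw 1 le_rfl)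
  have hMH := forwardMaximal_nonneg (blockMajorant_nonneg (F := F) (Q := Q) (r := r)) x
  have hterms : ‖∑ n ∈ Finset.Icc 1 N, w n * F (Q * x + r + n)‖ ≤
      ∑ n ∈ Finset.Icc 1 N, W * blockMajorant F Q r (x + (n / Q : ℕ)) :=
    norm_sum_le_of_le _ fun n hn ↦ norm_mul_le_of_le (hw n (Finset.mem_Icc.1 hn).1)
      (norm_le_blockMajorant_add_div hQ n x)
  rw [← Finset.mul_sum] at hterms
  calc ‖(N : ℂ)⁻¹ * ∑ n ∈ Finset.Icc 1 N, w n * F (Q * x + r + n)‖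
      ≤ (N : ℝ)⁻¹ * (W * (2 * N * forwardMaximal (blockMajorant F Q r) x)) := by
        rw [norm_mul, norm_inv, Complex.norm_natCast]
        gcongr
        refine hterms.trans ?_
        gcongr
        exact sum_Icc_div_le_forwardMaximal blockMajorant_nonneg hsum hQ N x
    _ = (N : ℝ)⁻¹ * N * (2 * W * forwardMaximal (blockMajorant F Q r) x) := by ring
    _ ≤ 2 * W * forwardMaximal (blockMajorant F Q r) x :=
        mul_le_of_le_one_left (by positivity) inv_mul_le_one

section BandLimited

open Complex MeasureTheory

/-- The symbol `g` is `1`-periodic, square integrable over a period, and supported in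
`[-δ, δ] + ℤ`. -/
structure IsBandLimited (g : ℝ → ℂ) (δ : ℝ) : Prop where
  periodic : Function.Periodic g 1
  eq_zero : ∀ ξ, δ < |ξ| → |ξ| ≤ 1 / 2 → g ξ = 0
  memLp : MemLp g 2 (volume.restrict (Set.Ioc (-(1 / 2)) (1 / 2)))

variable {g : ℝ → ℂ} {δ : ℝ}

theorem IsBandLimited.mono {δ' : ℝ} (hg : IsBandLimited g δ) (h : δ ≤ δ') :
    IsBandLimited g δ' :=
  ⟨hg.periodic, fun ξ hξ ↦ hg.eq_zero ξ (h.trans_lt hξ), hg.memLp⟩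

theorem IsBandLimited.intervalIntegrable (hg : IsBandLimited g δ) (a b : ℝ) :
    IntervalIntegrable g volume a b := by
  refine hg.periodic.intervalIntegrable one_ne_zero (t := -(1 / 2)) ?_ a b
  rw [intervalIntegrable_iff_integrableOn_Ioc_of_le (by norm_num)]
  norm_num1
  exact hg.memLp.integrable one_le_two

theorem norm_exp_two_pi_I_mul (ξ y : ℝ) : ‖exp (2 * Real.pi * I * ξ * y)‖ = 1 := by
  simp [norm_exp]

theorem periodic_exp_two_pi_I_mul (y : ℤ) :
    Function.Periodic (fun ξ : ℝ ↦ exp (2 * Real.pi * I * ξ * y)) 1 := fun ξ ↦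
  exp_eq_exp_iff_exists_int.2 ⟨y, by push_cast; ring⟩

theorem norm_exp_two_pi_I_mul_sub_one_le (ξ : ℝ) :
    ‖exp (2 * Real.pi * I * ξ) - 1‖ ≤ 2 * Real.pi * |ξ| := by
  have := Real.norm_exp_I_mul_ofReal_sub_one_le (x := 2 * Real.pi * ξ)
  rw [Real.norm_eq_abs, abs_mul, abs_of_pos Real.two_pi_pos] at this
  convert this using 4
  push_cast
  ring

theorem integral_neg_half_half_eq_of_eq_zero {E : Type*} [NormedAddCommGroup E]
    [NormedSpace ℝ E] {u : ℝ → E} (h₀ : 0 ≤ δ) (hδ : δ ≤ 1 / 2)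
    (hu : ∀ ξ, δ < |ξ| → |ξ| ≤ 1 / 2 → u ξ = 0) :
    ∫ ξ in -(1 / 2)..1 / 2, u ξ = ∫ ξ in -δ..δ, u ξ := by
  rw [intervalIntegral.integral_of_le (by norm_num), intervalIntegral.integral_of_le (by linarith),
    ← integral_Icc_eq_integral_Ioc, ← integral_Icc_eq_integral_Ioc]
  refine setIntegral_eq_of_subset_of_forall_sdiff_eq_zero measurableSet_Icc
    (Set.Icc_subset_Icc (by linarith) hδ) fun ξ hξ ↦ hu ξ ?_ (abs_le.2 hξ.1)
  exact not_le.1 fun h ↦ hξ.2 (abs_le.1 h)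

theorem IsBandLimited.FinvInt_eq_integral (hg : IsBandLimited g δ) (h₀ : 0 ≤ δ) (hδ : δ ≤ 1 / 2)
    (y : ℤ) :
    FinvInt g y = ∫ ξ in -δ..δ, g ξ * exp (2 * Real.pi * I * ξ * y) := by
  have hshift := (hg.periodic.mul (periodic_exp_two_pi_I_mul y)).intervalIntegral_add_eq
    0 (-(1 / 2))
  norm_num1 at hshift
  rw [FinvInt, ← integral_neg_half_half_eq_of_eq_zero h₀ hδ fun ξ h₁ h₂ ↦ by
    rw [hg.eq_zero ξ h₁ h₂, zero_mul]]
  exact hshift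

theorem one_div_two_mul_sub_neg (a : ℝ) : 1 / (2 * a) - -(1 / (2 * a)) = a⁻¹ := by ring

theorem one_div_two_mul_natCast_le {Q : ℕ} (hQ : 0 < Q) : (1 / (2 * Q) : ℝ) ≤ 1 / 2 := by
  gcongr
  exact le_mul_of_one_le_right two_pos.le (mod_cast hQ)

theorem IsBandLimited.norm_FinvInt_eq_norm_fourierCoeffOn {Q : ℕ} (hQ : 0 < Q)
    (hg : IsBandLimited g (1 / (2 * Q))) (c x : ℤ) (hab : -(1 / (2 * Q) : ℝ) < 1 / (2 * Q)) :
    ‖FinvInt g (Q * x + c)‖ =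
      (Q : ℝ)⁻¹ * ‖fourierCoeffOn hab (fun ξ ↦ g ξ * exp (2 * Real.pi * I * ξ * c)) (-x)‖ := by
  rw [hg.FinvInt_eq_integral (by positivity) (one_div_two_mul_natCast_le hQ),
    fourierCoeffOn_eq_integral, one_div_two_mul_sub_neg, norm_smul, one_div (Q : ℝ)⁻¹, inv_inv,
    Real.norm_natCast, inv_mul_cancel_left₀ (by positivity)]
  congr 1
  refine intervalIntegral.integral_congr fun ξ _ ↦ ?_
  simp only [fourier_coe_apply, smul_eq_mul, neg_neg]
  rw [mul_left_comm, ← exp_add]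
  congr 2
  push_cast
  field_simp

theorem IsBandLimited.hasSum_sq_norm_FinvInt {Q : ℕ} (hQ : 0 < Q)
    (hg : IsBandLimited g (1 / (2 * Q))) (c : ℤ) :
    HasSum (fun x : ℤ ↦ ‖FinvInt g (Q * x + c)‖ ^ 2)
      ((Q : ℝ)⁻¹ * ∫ ξ in -(1 / 2)..1 / 2, ‖g ξ‖ ^ 2) := by
  have hpos : 0 < (1 / (2 * Q) : ℝ) := by positivity
  have hhalf := one_div_two_mul_natCast_le hQ
  have hnorm (ξ : ℝ) : ‖g ξ * exp (2 * Real.pi * I * ξ * c)‖ = ‖g ξ‖ := by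
    rw [norm_mul, ← ofReal_intCast, norm_exp_two_pi_I_mul, mul_one]
  have hmem : MemLp (fun ξ ↦ g ξ * exp (2 * Real.pi * I * ξ * c)) 2
      (volume.restrict (Set.Ioc (-(1 / (2 * Q))) (1 / (2 * Q)))) := by
    have hg' := hg.memLp.mono_measure
      (Measure.restrict_mono (Set.Ioc_subset_Ioc (neg_le_neg hhalf) hhalf) le_rfl)
    exact hg'.congr_norm (hg'.1.mul (by fun_prop)) (.of_forall fun ξ ↦ (hnorm ξ).symm)
  have hparseval := ((Equiv.neg ℤ).hasSum_iff.2
    (hasSum_sq_fourierCoeffOn (neg_lt_self hpos) hmem)).mul_left ((Q : ℝ)⁻¹ ^ 2)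
  have henergy : ∫ ξ in -(1 / 2)..1 / 2, ‖g ξ‖ ^ 2 =
      ∫ ξ in -(1 / (2 * Q) : ℝ)..1 / (2 * Q), ‖g ξ‖ ^ 2 :=
    integral_neg_half_half_eq_of_eq_zero hpos.le hhalf fun ξ h₁ h₂ ↦ by simp [hg.eq_zero ξ h₁ h₂]
  have hscale (E : ℝ) : (Q : ℝ)⁻¹ ^ 2 * (Q * E) = (Q : ℝ)⁻¹ * E := by field_simp
  simp only [hnorm, ← henergy, one_div_two_mul_sub_neg, inv_inv, smul_eq_mul, hscale] at hparseval
  simp only [hg.norm_FinvInt_eq_norm_fourierCoeffOn hQ c _ (neg_lt_self hpos), mul_pow]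
  exact hparseval

theorem FinvInt_exp_sub_one_mul (hg : IntervalIntegrable g volume 0 1) (y : ℤ) :
    FinvInt (fun ξ ↦ (exp (2 * Real.pi * I * ξ) - 1) * g ξ) y =
      FinvInt g (y + 1) - FinvInt g y := by
  unfold FinvInt
  rw [← intervalIntegral.integral_sub]
  · refine intervalIntegral.integral_congr fun ξ _ ↦ ?_
    have : exp (2 * Real.pi * I * ξ * (y + 1 : ℤ)) =
        exp (2 * Real.pi * I * ξ) * exp (2 * Real.pi * I * ξ * y) := by
      rw [← exp_add]
      push_cast
      ring_nf
    simp only [this]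
    ring
  all_goals exact hg.mul_continuousOn (by fun_prop)

theorem IsBandLimited.exp_sub_one_mul (hg : IsBandLimited g δ) :
    IsBandLimited (fun ξ ↦ (exp (2 * Real.pi * I * ξ) - 1) * g ξ) δ where
  periodic ξ := by
    have := periodic_exp_two_pi_I_mul 1 ξ
    simp only [Int.cast_one, mul_one] at this
    simp only [this, hg.periodic ξ]
  eq_zero ξ h₁ h₂ := by rw [hg.eq_zero ξ h₁ h₂, mul_zero]
  memLp := by
    refine hg.memLp.of_le_mul (c := 2) (.mul (by fun_prop) hg.memLp.1) (.of_forall fun ξ ↦ ?_)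
    rw [norm_mul]
    gcongr
    refine (norm_sub_le _ _).trans_eq ?_
    have := norm_exp_two_pi_I_mul ξ 1
    rw [ofReal_one, mul_one] at this
    rw [this, norm_one, one_add_one_eq_two]

theorem IsBandLimited.integral_sq_norm_exp_sub_one_mul_le (hg : IsBandLimited g δ) :
    ∫ ξ in -(1 / 2)..1 / 2, ‖(exp (2 * Real.pi * I * ξ) - 1) * g ξ‖ ^ 2 ≤
      (2 * Real.pi * δ) ^ 2 * ∫ ξ in -(1 / 2)..1 / 2, ‖g ξ‖ ^ 2 := by
  have hint {h : ℝ → ℂ} (hh : IsBandLimited h δ) :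
      IntervalIntegrable (fun ξ ↦ ‖h ξ‖ ^ 2) volume (-(1 / 2)) (1 / 2) :=
    (intervalIntegrable_iff_integrableOn_Ioc_of_le (by norm_num)).2 hh.memLp.integrable_norm_pow'
  rw [← intervalIntegral.integral_const_mul]
  refine intervalIntegral.integral_mono_on (by norm_num) (hint hg.exp_sub_one_mul)
    ((hint hg).const_mul _) fun ξ hξ ↦ ?_
  obtain h | h := lt_or_ge δ |ξ|
  · simp [hg.eq_zero ξ h (abs_le.2 hξ)]
  · rw [norm_mul, mul_pow]
    gcongr
    exact (norm_exp_two_pi_I_mul_sub_one_le ξ).trans (by gcongr)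

theorem IsBandLimited.summable_sq_blockMajorant_and_tsum_le {Q : ℕ} (hQ : 0 < Q)
    (hg : IsBandLimited g (1 / (2 * Q))) (r : ℤ) :
    Summable (fun x ↦ blockMajorant (FinvInt g) Q r x ^ 2) ∧
      ∑' x, blockMajorant (FinvInt g) Q r x ^ 2 ≤
        22 * ∑' x : ℤ, ‖FinvInt g (Q * x + r)‖ ^ 2 := by
  have hincr (j : ℕ) := hg.exp_sub_one_mul.hasSum_sq_norm_FinvInt hQ (r + j)
  simp only [FinvInt_exp_sub_one_mul (hg.intervalIntegrable 0 1), ← add_assoc] at hincr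
  have hvalue := hg.hasSum_sq_norm_FinvInt hQ r
  obtain ⟨hsum, hle⟩ := summable_sq_blockMajorant_and_tsum_le_of_hasSum hvalue hincr
  refine ⟨hsum, hle.trans ?_⟩
  rw [hvalue.tsum_eq]
  set A := ∫ ξ in -(1 / 2)..1 / 2, ‖g ξ‖ ^ 2
  have hA : 0 ≤ A := intervalIntegral.integral_nonneg (by norm_num) fun _ _ ↦ sq_nonneg _
  have hπ : 2 + 2 * Real.pi ^ 2 ≤ 22 := by nlinarith [Real.pi_pos, Real.pi_lt_d2]
  calc _ ≤ 2 * ((Q : ℝ)⁻¹ * A) +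
        2 * (Q * (Q * ((Q : ℝ)⁻¹ * ((2 * Real.pi * (1 / (2 * Q))) ^ 2 * A)))) := by
        gcongr
        exact hg.integral_sq_norm_exp_sub_one_mul_le
    _ = (2 + 2 * Real.pi ^ 2) * ((Q : ℝ)⁻¹ * A) := by field_simp
    _ ≤ 22 * ((Q : ℝ)⁻¹ * A) := by gcongr

end BandLimited

section Multiplier

open Complex MeasureTheory

variable {g : ℝ → ℂ} {β : ℝ}

theorem FinvInt_Mhat_mul (hg : IntervalIntegrable g volume 0 1) (β : ℝ) (N : ℕ) (y : ℤ) :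
    FinvInt (fun ξ ↦ Mhat β N ξ * g ξ) y = (N : ℂ)⁻¹ * ∑ n ∈ Finset.Icc 1 N,
      ((((n : ℝ) ^ β - ((n : ℝ) - 1) ^ β) / β : ℝ) : ℂ) * FinvInt g (y + n) := by
  unfold FinvInt
  simp_rw [← intervalIntegral.integral_const_mul]
  rw [← intervalIntegral.integral_finsetSum, ← intervalIntegral.integral_const_mul]
  · refine intervalIntegral.integral_congr fun ξ _ ↦ ?_
    simp only [Mhat, mul_assoc, Finset.sum_mul]
    congr! 3 with n
    push_cast
    simp only [mul_add, exp_add]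
    ring
  · exact fun n _ ↦ (hg.mul_continuousOn (by fun_prop)).const_mul _

theorem norm_rpow_sub_rpow_div_le (hβ₀ : 0 < β) (hβ₁ : β ≤ 1) {n : ℕ} (hn : 1 ≤ n) :
    ‖((((n : ℝ) ^ β - ((n : ℝ) - 1) ^ β) / β : ℝ) : ℂ)‖ ≤ 1 / β := by
  have hm : (0 : ℝ) ≤ n - 1 := sub_nonneg.2 (mod_cast hn)
  have hmono : ((n : ℝ) - 1) ^ β ≤ (n : ℝ) ^ β := by gcongr; linarith
  have hsubadd : (n : ℝ) ^ β ≤ ((n : ℝ) - 1) ^ β + 1 := by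
    simpa using Real.rpow_add_le_add_rpow hm zero_le_one hβ₀.le hβ₁
  rw [norm_real, Real.norm_of_nonneg (div_nonneg (sub_nonneg.2 hmono) hβ₀.le)]
  gcongr
  linarith

theorem IsBandLimited.iSup_norm_FinvInt_Mhat_mul_le {ι : Type*} {Q : ℕ} (hQ : 0 < Q)
    (hg : IsBandLimited g (1 / (2 * Q))) (hβ₀ : 0 < β) (hβ₁ : β ≤ 1) (N : ι → ℕ) (r x : ℤ) :
    ⨆ i, ‖FinvInt (fun ξ ↦ Mhat β (N i) ξ * g ξ) (Q * x + r)‖ ≤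
      2 * (1 / β) * forwardMaximal (blockMajorant (FinvInt g) Q r) x := by
  have hMH := forwardMaximal_nonneg (blockMajorant_nonneg (F := FinvInt g) (Q := Q) (r := r)) x
  refine Real.iSup_le (fun i ↦ ?_) (by positivity)
  rw [FinvInt_Mhat_mul (hg.intervalIntegrable 0 1)]
  exact norm_weightedAverage_le_forwardMaximal hQ
    (hg.summable_sq_blockMajorant_and_tsum_le hQ r).1
    (fun n hn ↦ norm_rpow_sub_rpow_div_le hβ₀ hβ₁ hn) (N i) x

theorem IsBandLimited.sqrt_tsum_sq_iSup_norm_FinvInt_Mhat_mul_le {ι : Type*} {Q : ℕ} (hQ : 0 < Q)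
    (hg : IsBandLimited g (1 / (2 * Q))) (hβ₀ : 0 < β) (hβ₁ : β ≤ 1) (N : ι → ℕ) (r : ℤ) :
    Real.sqrt (∑' x : ℤ, (⨆ i, ‖FinvInt (fun ξ ↦ Mhat β (N i) ξ * g ξ) (Q * x + r)‖) ^ 2) ≤
      20 / β * Real.sqrt (∑' x : ℤ, ‖FinvInt g (Q * x + r)‖ ^ 2) := by
  obtain ⟨hsum, hmajorant⟩ := hg.summable_sq_blockMajorant_and_tsum_le hQ r
  set S := ∑' x : ℤ, ‖FinvInt g (Q * x + r)‖ ^ 2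
  have hS : 0 ≤ S := tsum_nonneg fun _ ↦ sq_nonneg _
  have hpartial (t : Finset ℤ) :
      ∑ x ∈ t, (⨆ i, ‖FinvInt (fun ξ ↦ Mhat β (N i) ξ * g ξ) (Q * x + r)‖) ^ 2 ≤
        (20 / β) ^ 2 * S := by
    calc _ ≤ ∑ x ∈ t, (2 * (1 / β) * forwardMaximal (blockMajorant (FinvInt g) Q r) x) ^ 2 := by
          gcongr with x
          · exact Real.iSup_nonneg fun _ ↦ norm_nonneg _
          · exact hg.iSup_norm_FinvInt_Mhat_mul_le hQ hβ₀ hβ₁ N r x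
      _ ≤ (2 * (1 / β)) ^ 2 * (4 * (22 * S)) := by
          simp_rw [mul_pow _ (forwardMaximal _ _), ← Finset.mul_sum]
          gcongr
          exact (sum_sq_forwardMaximal_le blockMajorant_nonneg hsum t).trans (by gcongr)
      _ = 352 / β ^ 2 * S := by ring
      _ ≤ (20 / β) ^ 2 * S := by
          rw [div_pow]
          gcongr
          norm_num
  refine Real.sqrt_le_iff.2 ⟨by positivity, ?_⟩
  rw [mul_pow, Real.sq_sqrt hS]
  exact Real.tsum_le_of_sum_le (fun _ ↦ sq_nonneg _) hpartial

end Multiplier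

section Cutoff

open Complex MeasureTheory

variable {η : ℝ → ℝ} {f : ℤ → ℂ}

theorem periodic_fhat (f : ℤ → ℂ) : Function.Periodic (fhat f) 1 := fun ξ ↦
  tsum_congr fun n ↦ congrArg (f n * ·) <|
    exp_eq_exp_iff_exists_int.2 ⟨-n, by push_cast; ring⟩

theorem continuous_fhat (hf : Summable fun n ↦ ‖f n‖) : Continuous (fhat f) := by
  refine continuous_tsum (fun n ↦ by fun_prop) hf fun n ξ ↦ ?_
  simp [norm_exp]

theorem periodic_etaPer (η : ℝ → ℝ) (s : ℕ) : Function.Periodic (etaPer η s) 1 := fun ξ ↦ by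
  unfold etaPer
  rw [← (Equiv.addRight (1 : ℤ)).tsum_eq]
  simp

theorem etaPer_eq_of_abs_le (hη : ∀ ξ : ℝ, 1 / 2 ≤ |ξ| → η ξ = 0) (s : ℕ) {ξ : ℝ}
    (hξ : |ξ| ≤ 1 / 2) : etaPer η s ξ = η (2 ^ (4 * s) * ξ) := by
  rw [etaPer, tsum_eq_single 0 fun k hk ↦ ?_, Int.cast_zero, sub_zero]
  have hk : (1 : ℝ) ≤ |(k : ℝ)| := mod_cast Int.one_le_abs hk
  have hfar : 1 / 2 ≤ |ξ - k| := by
    linarith [abs_sub_abs_le_abs_sub (k : ℝ) ξ, abs_sub_comm (k : ℝ) ξ]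
  refine hη _ (hfar.trans ?_)
  rw [abs_mul, abs_of_pos (a := 2 ^ (4 * s)) (by positivity)]
  exact le_mul_of_one_le_left (abs_nonneg _) (one_le_pow₀ one_le_two)

theorem isBandLimited_etaPer_mul_fhat (hη : Continuous η)
    (hη₀ : ∀ ξ : ℝ, 1 / 2 ≤ |ξ| → η ξ = 0) (s : ℕ) (hf : Summable fun n ↦ ‖f n‖) :
    IsBandLimited (fun ξ ↦ (etaPer η s ξ : ℂ) * fhat f ξ) (1 / (2 * 2 ^ (4 * s))) where
  periodic ξ := by simp only [periodic_etaPer η s ξ, periodic_fhat f ξ]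
  eq_zero ξ h₁ h₂ := by
    have hlarge : 1 / 2 ≤ |2 ^ (4 * s) * ξ| := by
      rw [abs_mul, abs_of_pos (by positivity)]
      rw [div_lt_iff₀ (by positivity)] at h₁
      linarith
    rw [etaPer_eq_of_abs_le hη₀ s h₂, hη₀ _ hlarge, ofReal_zero, zero_mul]
  memLp := by
    have hcont : Continuous fun ξ ↦ (η (2 ^ (4 * s) * ξ) : ℂ) * fhat f ξ :=
      (by fun_prop : Continuous fun ξ : ℝ ↦ (η (2 ^ (4 * s) * ξ) : ℂ)).mul (continuous_fhat hf)
    have hmem : MemLp (fun ξ ↦ (η (2 ^ (4 * s) * ξ) : ℂ) * fhat f ξ) 2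
        (volume.restrict (Set.Ioc (-(1 / 2)) (1 / 2))) :=
      (memLp_two_iff_integrable_sq_norm hcont.aestronglyMeasurable).2
        (hcont.norm.pow 2).integrableOn_Ioc
    refine (memLp_congr_ae ?_).1 hmem
    filter_upwards [ae_restrict_mem measurableSet_Ioc] with ξ hξ
    rw [etaPer_eq_of_abs_le hη₀ s (abs_le.2 ⟨hξ.1.le, hξ.2⟩)]

end Cutoff

theorem stmt_12_general {ι : Type*} (N : ι → ℕ) {η : ℝ → ℝ} (hη : Continuous η)
    (hη₀ : ∀ ξ : ℝ, 1 / 2 ≤ |ξ| → η ξ = 0) {s Q : ℕ} (hQ : 0 < Q) (hQs : Q ≤ 2 ^ (4 * s)) (r : ℤ)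
    {β : ℝ} (hβ₀ : 0 < β) (hβ₁ : β ≤ 1) {f : ℤ → ℂ} (hf : Summable fun n ↦ ‖f n‖) :
    Real.sqrt (∑' x : ℤ, (⨆ i, ‖FinvInt
        (fun ξ ↦ Mhat β (N i) ξ * (etaPer η s ξ : ℂ) * fhat f ξ) (Q * x + r)‖) ^ 2) ≤
      20 / β * Real.sqrt (∑' x : ℤ,
        ‖FinvInt (fun ξ ↦ (etaPer η s ξ : ℂ) * fhat f ξ) (Q * x + r)‖ ^ 2) := by
  have hQs' : (Q : ℝ) ≤ 2 ^ (4 * s) := mod_cast hQs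
  have hband := (isBandLimited_etaPer_mul_fhat hη hη₀ s hf).mono (δ' := 1 / (2 * Q)) (by gcongr)
  simpa only [mul_assoc] using
    hband.sqrt_tsum_sq_iSup_norm_FinvInt_Mhat_mul_le hQ hβ₀ hβ₁ N r

/-- `ℓ²` bound along residue classes for the maximal function of the multipliers
`M̂_{2^n}^β η_s`. -/
theorem stmt_12 (η : ℝ → ℝ) (hη : IsEta η) :
    ∃ C : ℝ, 0 < C ∧
      ∀ (s : ℕ), 1 ≤ s → ∀ (Q : ℕ), 1 ≤ Q → Q ≤ 2 ^ (2 * s) →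
        ∀ (r : ℕ), 1 ≤ r → r ≤ Q →
          ∀ (β : ℝ), 1 / 2 ≤ β → β ≤ 1 →
            ∀ (f : ℤ → ℂ), (Function.support f).Finite →
              Real.sqrt (∑' x : ℤ,
                  (⨆ n : ℕ, ‖FinvInt
                    (fun ξ => Mhat β (2 ^ n) ξ * (etaPer η s ξ : ℂ) * fhat f ξ)
                    ((Q : ℤ) * x + r)‖) ^ 2) ≤
                C * Real.sqrt (∑' x : ℤ,
                  ‖FinvInt (fun ξ => (etaPer η s ξ : ℂ) * fhat f ξ)
                    ((Q : ℤ) * x + r)‖ ^ 2) := by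
  refine ⟨40, by norm_num, fun s _ Q hQ hQs r _ _ β hβ hβ₁ f hf ↦ ?_⟩
  have hQs' : Q ≤ 2 ^ (4 * s) := hQs.trans (Nat.pow_le_pow_right two_pos (by lia))
  have hf' : Summable fun n ↦ ‖f n‖ := summable_of_hasFiniteSupport (hf.subset (by simp))
  have hβ₀ : 0 < β := by linarith
  refine (stmt_12_general (2 ^ ·) hη.1.continuous hη.2.2.2.1 hQ hQs' r hβ₀ hβ₁ hf').trans ?_
  gcongr
  rw [div_le_iff₀ hβ₀]
  linarith
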